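/- arXiv:2302.09338 — 6 statements merged into one kernel-verified Lean document; each statement's English description precedes it below -/
import Mathlib

section
/- The function g defined on (0, ∞) by g(x) = (1 + x)·ln(1 + 1/x)/√(2x + 1) is strictly decreasing on (0, ∞); moreover g(x) → ∞ as x → 0⁺ and g(x) → 0 as x → ∞, so g is a strictly decreasing bijection from (0, ∞) onto (0, ∞). -/
open Real Filter Set

/-- The threshold function `g(x) = (1 + x) · ln(1 + 1/x) / √(2x + 1)` for `x > 0`. -/
noncomputable def g (x : ℝ) : ℝ := (1 + x) * Real.log (1 + 1 / x) / Real.sqrt (2 * x + 1)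

lemma aux_log_lt {x : ℝ} (hx : 0 < x) : Real.log (1 + 1 / x) < 1 / x := by
  have h : 0 < 1 / x := by positivity
  have := Real.log_lt_sub_one_of_pos (x := 1 + 1 / x) (by positivity) (by linarith)
  linarith

lemma aux_log_pos {x : ℝ} (hx : 0 < x) : 0 < Real.log (1 + 1 / x) := by
  have h : 0 < 1 / x := by positivity
  exact Real.log_pos (by linarith)

lemma aux_deriv {x : ℝ} (hx : 0 < x) :
    HasDerivAt (fun x : ℝ => (1 + x) * Real.log (1 + 1 / x)) (Real.log (1 + 1 / x) - 1 / x) x := by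
  have h1 : HasDerivAt (fun x : ℝ => 1 + x) 1 x := (hasDerivAt_id x).const_add 1
  have h2 : HasDerivAt (fun x : ℝ => 1 + 1 / x) (-(x ^ 2)⁻¹) x := by
    simpa using (hasDerivAt_inv hx.ne').const_add 1
  have hp : 1 + 1 / x ≠ 0 := by positivity
  have h3 := h1.mul (h2.log hp)
  refine h3.congr_deriv ?_
  have : 1 + x ≠ 0 := by positivity
  have e : 1 + 1 / x = (1 + x) / x := by field_simp; ring
  rw [e]
  field_simp
  try ring

lemma aux_anti : StrictAntiOn (fun x : ℝ => (1 + x) * Real.log (1 + 1 / x)) (Set.Ioi (0 : ℝ)) := by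
  apply strictAntiOn_of_deriv_neg (convex_Ioi 0)
  · exact fun x hx => (aux_deriv hx).continuousAt.continuousWithinAt
  · intro x hx
    rw [interior_Ioi] at hx
    rw [(aux_deriv hx).deriv]
    linarith [aux_log_lt hx]

lemma aux_g_anti : StrictAntiOn g (Set.Ioi (0 : ℝ)) := by
  intro x hx y hy hxy
  have h := aux_anti hx hy hxy
  simp only [Set.mem_Ioi] at hx hy
  have hpos := aux_log_pos hy
  unfold g
  apply div_lt_div₀ h
  · exact Real.sqrt_le_sqrt (by linarith)
  · exact (by have := aux_log_pos hx; positivity)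
  · exact Real.sqrt_pos.2 (by linarith)

lemma aux_g_pos {x : ℝ} (hx : 0 < x) : 0 < g x := by
  have := aux_log_pos hx
  unfold g
  positivity

lemma aux_g_cont : ContinuousOn g (Set.Ioi (0 : ℝ)) := by
  intro x hx
  have hx' : (0 : ℝ) < x := hx
  refine ((aux_deriv hx).continuousAt.div (by fun_prop) ?_).continuousWithinAt
  positivity

lemma aux_g_zero : Filter.Tendsto g (nhdsWithin 0 (Set.Ioi 0)) Filter.atTop := by
  have h1 : Filter.Tendsto (fun x : ℝ => Real.log (1 + 1 / x) / 2)
      (nhdsWithin 0 (Set.Ioi 0)) Filter.atTop := by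
    apply Filter.Tendsto.atTop_div_const (by norm_num)
    apply Real.tendsto_log_atTop.comp
    apply Filter.tendsto_atTop_add_const_left
    exact (tendsto_inv_nhdsGT_zero (𝕜 := ℝ)).congr (fun x => (one_div x).symm)
  refine Filter.tendsto_atTop_mono' _ ?_ h1
  filter_upwards [Ioo_mem_nhdsGT (show (0 : ℝ) < 1 by norm_num)] with x hx
  obtain ⟨hx0, hx1⟩ := hx
  have hl := aux_log_pos hx0
  unfold g
  apply div_le_div₀
  · positivity
  · nlinarith
  · positivity
  · rw [Real.sqrt_le_left (by norm_num)]; linarith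

lemma aux_g_top : Filter.Tendsto g Filter.atTop (nhds 0) := by
  have h1 : Filter.Tendsto (fun x : ℝ => 2 / Real.sqrt (2 * x + 1)) Filter.atTop (nhds 0) := by
    apply Filter.Tendsto.const_div_atTop
    apply Real.tendsto_sqrt_atTop.comp
    apply Filter.tendsto_atTop_add_const_right
    exact Filter.tendsto_id.const_mul_atTop (by norm_num)
  refine tendsto_of_tendsto_of_tendsto_of_le_of_le' tendsto_const_nhds h1 ?_ ?_
  · filter_upwards [Filter.eventually_gt_atTop 0] with x hx using (aux_g_pos hx).le
  · filter_upwards [Filter.eventually_ge_atTop 1] with x hx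
    have hx0 : 0 < x := by linarith
    unfold g
    apply div_le_div_of_nonneg_right _ (Real.sqrt_nonneg _)
    calc (1 + x) * Real.log (1 + 1 / x) ≤ (1 + x) * (1 / x) := by
          have := aux_log_lt hx0
          gcongr
      _ ≤ 2 := by
          rw [mul_one_div, div_le_iff₀ hx0]; linarith

/-- `g` is strictly decreasing on `(0, ∞)`, tends to `∞` as `x → 0⁺`, tends to `0`
as `x → ∞`, and is a strictly decreasing bijection from `(0, ∞)` onto `(0, ∞)`. -/
theorem g_strictAnti_tendsto_bijOn :
    StrictAntiOn g (Set.Ioi (0 : ℝ)) ∧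
    Filter.Tendsto g (nhdsWithin 0 (Set.Ioi 0)) Filter.atTop ∧
    Filter.Tendsto g Filter.atTop (nhds 0) ∧
    Set.BijOn g (Set.Ioi 0) (Set.Ioi 0) := by
  refine ⟨aux_g_anti, aux_g_zero, aux_g_top, fun x hx => aux_g_pos hx, aux_g_anti.injOn, ?_⟩
  intro y hy
  obtain ⟨a, ha, ha0⟩ :=
    ((aux_g_zero.eventually_ge_atTop y).and self_mem_nhdsWithin).exists
  obtain ⟨b, hb, hb0⟩ :=
    ((aux_g_top.eventually_lt_const hy).and (Filter.eventually_gt_atTop 0)).exists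
  exact isPreconnected_Ioi.intermediate_value hb0 ha0 aux_g_cont ⟨hb.le, ha⟩
end

section
/- Let α ≥ 0 and let x₀ > 0 satisfy α ≤ g(x₀), where g(x) = (1 + x)·ln(1 + 1/x)/√(2x + 1). Then the function f_α(x) = ln(1 + 1/x) − α·√(2x + 1)/(1 + x) is strictly decreasing on the interval (0, x₀]. -/
/-- The finite-blocklength rate as a function of the inverse SINR:
`f_α(x) = ln(1 + 1/x) − α·√(2x + 1)/(1 + x)`. -/
noncomputable def fα (α x : ℝ) : ℝ :=
  Real.log (1 + 1 / x) - α * Real.sqrt (2 * x + 1) / (1 + x)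

lemma fα_hasDerivAt (α x : ℝ) (hx : 0 < x) :
    HasDerivAt (fα α)
      (-1 / (x * (1 + x)) + α * x / (Real.sqrt (2 * x + 1) * (1 + x) ^ 2)) x := by
  have hs : 0 < Real.sqrt (2 * x + 1) := Real.sqrt_pos.mpr (by linarith)
  have hsq : Real.sqrt (2 * x + 1) ^ 2 = 2 * x + 1 := Real.sq_sqrt (by linarith)
  have h1 : HasDerivAt (fun y : ℝ => 1 + 1 / y) (-(x ^ 2)⁻¹) x := by
    simpa using (hasDerivAt_inv hx.ne').const_add 1
  have h2 := h1.log (by positivity)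
  have h3 : HasDerivAt (fun y : ℝ => 2 * y + 1) 2 x := by
    simpa using ((hasDerivAt_id x).const_mul 2).add_const 1
  have h4 := (h3.sqrt (by positivity)).const_mul α
  have h5 : HasDerivAt (fun y : ℝ => 1 + y) 1 x := (hasDerivAt_id x).const_add 1
  have h6 := h2.sub (h4.div h5 (by positivity))
  refine h6.congr_deriv ?_
  generalize Real.sqrt (2 * x + 1) = s at *
  have hx1 : 1 + x ≠ 0 := by positivity
  have e1 : -(x ^ 2)⁻¹ / (1 + 1 / x) = -1 / (x * (1 + x)) := by
    have : x + 1 ≠ 0 := by positivity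
    field_simp
    ring
  have e2 : (α * (2 / (2 * s)) * (1 + x) - α * s * 1) / (1 + x) ^ 2
      = -(α * x / (s * (1 + x) ^ 2)) := by
    field_simp
    rw [hsq]
    ring
  rw [e1, e2]
  ring

/-- If `α ≥ 0` and `x₀ > 0` satisfy `α ≤ g(x₀)`, then `f_α` is strictly decreasing
on `(0, x₀]`. -/
theorem fα_strictAntiOn (α x₀ : ℝ) (hα : 0 ≤ α) (hx₀ : 0 < x₀) (hg : α ≤ g x₀) :
    StrictAntiOn (fα α) (Set.Ioc 0 x₀) := by
  apply strictAntiOn_of_deriv_neg (convex_Ioc 0 x₀)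
  · intro x hx
    exact (fα_hasDerivAt α x hx.1).continuousAt.continuousWithinAt
  · intro x hx
    rw [interior_Ioc] at hx
    obtain ⟨hx, hxx⟩ := hx
    rw [(fα_hasDerivAt α x hx).deriv]
    have hs : 0 < Real.sqrt (2 * x + 1) := Real.sqrt_pos.mpr (by linarith)
    have hsq : Real.sqrt (2 * x + 1) ^ 2 = 2 * x + 1 := Real.sq_sqrt (by linarith)
    have ht : 0 < Real.sqrt (2 * x₀ + 1) := Real.sqrt_pos.mpr (by linarith)
    have hst : Real.sqrt (2 * x + 1) ≤ Real.sqrt (2 * x₀ + 1) :=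
      Real.sqrt_le_sqrt (by linarith)
    have hlog : Real.log (1 + 1 / x₀) ≤ 1 / x₀ := by
      have := Real.log_le_sub_one_of_pos (x := 1 + 1 / x₀) (by positivity)
      linarith
    unfold g at hg
    rw [le_div_iff₀ ht] at hg
    have h1 : α * Real.sqrt (2 * x + 1) ≤ (1 + x₀) * (1 / x₀) :=
      (mul_le_mul_of_nonneg_left hst hα).trans
        (hg.trans (mul_le_mul_of_nonneg_left hlog (by positivity)))
    have h2 : (1 + x₀) * (1 / x₀) ≤ (1 + x) * (1 / x) := by
      have : 1 / x₀ ≤ 1 / x := one_div_le_one_div_of_le hx hxx.le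
      have e1 : (1 + x₀) * (1 / x₀) = 1 / x₀ + 1 := by field_simp
      have e2 : (1 + x) * (1 / x) = 1 / x + 1 := by field_simp
      linarith
    have h3 : α * Real.sqrt (2 * x + 1) * x ≤ 1 + x := by
      have := mul_le_mul_of_nonneg_right (h1.trans h2) hx.le
      have e2 : (1 + x) * (1 / x) * x = 1 + x := by field_simp
      linarith
    generalize Real.sqrt (2 * x + 1) = s at *
    have e : -1 / (x * (1 + x)) + α * x / (s * (1 + x) ^ 2)
        = (α * s * x * x - (1 + x) * s ^ 2) / (x * s ^ 2 * (1 + x) ^ 2) := by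
      field_simp
      ring
    rw [e]
    apply div_neg_of_neg_of_pos _ (by positivity)
    rw [hsq]
    nlinarith
end

section
/- Let α ≥ 0 and let x₀ > 0 satisfy α ≤ g(x₀), where g(x) = (1 + x)·ln(1 + 1/x)/√(2x + 1). Then the function f_α(x) = ln(1 + 1/x) − α·√(2x + 1)/(1 + x) is convex on the interval (0, x₀]. -/
theorem fα_aux_alpha (α x₀ x : ℝ) (hx : 0 < x) (hxx : x ≤ x₀) (hg : α ≤ g x₀) :
    α * (x * Real.sqrt (2 * x + 1)) ≤ 1 + x := by
  have hx₀ : 0 < x₀ := lt_of_lt_of_le hx hxx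
  have hs : 0 < Real.sqrt (2 * x + 1) := Real.sqrt_pos.mpr (by linarith)
  have hlog : Real.log (1 + 1 / x₀) ≤ 1 / x₀ := by
    have := Real.log_le_sub_one_of_pos (show 0 < 1 + 1 / x₀ by positivity)
    linarith
  have h1 : g x₀ ≤ (1 + x₀) * (1 / x₀) / Real.sqrt (2 * x₀ + 1) := by
    unfold g
    gcongr
  have h2 : (1 + x₀) * (1 / x₀) / Real.sqrt (2 * x₀ + 1)
      ≤ (1 + x) * (1 / x) / Real.sqrt (2 * x + 1) := by
    have e : ∀ y : ℝ, 0 < y → (1 + y) * (1 / y) = 1 / y + 1 := by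
      intro y hy
      field_simp
    rw [e x hx, e x₀ hx₀]
    gcongr
  have h3 : α ≤ (1 + x) * (1 / x) / Real.sqrt (2 * x + 1) := hg.trans (h1.trans h2)
  have h4 : (1 + x) * (1 / x) / Real.sqrt (2 * x + 1)
      = (1 + x) / (x * Real.sqrt (2 * x + 1)) := by
    field_simp
  rw [h4] at h3
  exact (le_div_iff₀ (by positivity)).mp h3

theorem fα_hasDeriv (α x : ℝ) (hx : 0 < x) :
    HasDerivAt (fα α)
      (1 / (1 + x) - 1 / x + α * (x / (Real.sqrt (2 * x + 1) * (1 + x) ^ 2))) x := by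
  have hq : 0 < 2 * x + 1 := by linarith
  have hs : 0 < Real.sqrt (2 * x + 1) := Real.sqrt_pos.mpr hq
  have hs2 : Real.sqrt (2 * x + 1) ^ 2 = 2 * x + 1 := Real.sq_sqrt hq.le
  have d1 : HasDerivAt (fun y : ℝ => 1 + y) 1 x := (hasDerivAt_id x).const_add 1
  have d2 : HasDerivAt (fun y : ℝ => 2 * y + 1) 2 x := by
    simpa using ((hasDerivAt_id x).const_mul 2).add_const 1
  have d3 := d2.sqrt hq.ne'
  have d4 : HasDerivAt (fun y : ℝ => 1 + 1 / y) (-(x ^ 2)⁻¹) x := by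
    simpa using (hasDerivAt_inv hx.ne').const_add 1
  have d5 := d4.log (by positivity)
  have d6 := d5.sub ((d3.const_mul α).div d1 (by positivity))
  refine d6.congr_deriv ?_
  generalize Real.sqrt (2 * x + 1) = s at *
  have hx' : x = (s ^ 2 - 1) / 2 := by linarith
  have h1x : 1 + x ≠ 0 := by positivity
  have e1 : -(x ^ 2)⁻¹ / (1 + 1 / x) = 1 / (1 + x) - 1 / x := by
    field_simp
    ring
  rw [e1]
  field_simp
  linear_combination (α * x) * hs2

theorem fα_hasDeriv2 (α x : ℝ) (hx : 0 < x) :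
    HasDerivAt
      (fun x => 1 / (1 + x) - 1 / x + α * (x / (Real.sqrt (2 * x + 1) * (1 + x) ^ 2)))
      ((2 * x + 1) / (x ^ 2 * (1 + x) ^ 2)
        - α * ((3 * x ^ 2 - 1) / (Real.sqrt (2 * x + 1) ^ 3 * (1 + x) ^ 3))) x := by
  have hq : 0 < 2 * x + 1 := by linarith
  have hs : 0 < Real.sqrt (2 * x + 1) := Real.sqrt_pos.mpr hq
  have hs2 : Real.sqrt (2 * x + 1) ^ 2 = 2 * x + 1 := Real.sq_sqrt hq.le
  have h1x : 1 + x ≠ 0 := by positivity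
  have d1 : HasDerivAt (fun y : ℝ => 1 + y) 1 x := (hasDerivAt_id x).const_add 1
  have d2 : HasDerivAt (fun y : ℝ => 2 * y + 1) 2 x := by
    simpa using ((hasDerivAt_id x).const_mul 2).add_const 1
  have d3 := d2.sqrt hq.ne'
  have d4 : HasDerivAt (fun y : ℝ => 1 / y) (-(x ^ 2)⁻¹) x := by
    simpa using (hasDerivAt_inv hx.ne')
  have d5 : HasDerivAt (fun y : ℝ => 1 / (1 + y)) (-1 / (1 + x) ^ 2) x := by
    simpa using d1.fun_inv h1x
  have d6 := (d5.sub d4).add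
    (((hasDerivAt_id x).div (d3.mul (d1.pow 2)) (mul_ne_zero hs.ne' (pow_ne_zero 2 h1x))).const_mul α)
  refine d6.congr_deriv ?_
  simp only [id, Pi.mul_apply, Pi.pow_apply]
  generalize Real.sqrt (2 * x + 1) = s at *
  have e1 : -1 / (1 + x) ^ 2 - -(x ^ 2)⁻¹ = (2 * x + 1) / (x ^ 2 * (1 + x) ^ 2) := by
    field_simp
    ring
  rw [e1, sub_eq_add_neg, ← mul_neg]
  congr 2
  push_cast
  field_simp
  simp only [hs2]
  ring

/-- If `α ≥ 0` and `x₀ > 0` satisfy `α ≤ g(x₀)`, then `f_α` is convex on `(0, x₀]`. -/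
theorem fα_convexOn (α x₀ : ℝ) (hα : 0 ≤ α) (hx₀ : 0 < x₀) (hg : α ≤ g x₀) :
    ConvexOn ℝ (Set.Ioc 0 x₀) (fα α) := by
  refine convexOn_of_hasDerivWithinAt2_nonneg (convex_Ioc 0 x₀)
    (fun x hx => (fα_hasDeriv α x hx.1).continuousAt.continuousWithinAt)
    (fun x hx => (fα_hasDeriv α x (interior_subset hx).1).hasDerivWithinAt)
    (fun x hx => (fα_hasDeriv2 α x (interior_subset hx).1).hasDerivWithinAt) ?_
  intro x hx
  obtain ⟨hx, hxx⟩ := interior_subset hx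
  have hA := fα_aux_alpha α x₀ x hx hxx hg
  have hq : 0 < 2 * x + 1 := by linarith
  have hs : 0 < Real.sqrt (2 * x + 1) := Real.sqrt_pos.mpr hq
  have hs2 : Real.sqrt (2 * x + 1) ^ 2 = 2 * x + 1 := Real.sq_sqrt hq.le
  generalize Real.sqrt (2 * x + 1) = s at *
  have key : α * (3 * x ^ 2 - 1) * x ^ 2 ≤ (2 * x + 1) * s ^ 3 * (1 + x) := by
    rcases le_total (3 * x ^ 2 - 1) 0 with h | h
    · have : α * (3 * x ^ 2 - 1) * x ^ 2 ≤ 0 :=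
        mul_nonpos_of_nonpos_of_nonneg (mul_nonpos_of_nonneg_of_nonpos hα h) (by positivity)
      exact this.trans (by positivity)
    · have h1 := mul_le_mul_of_nonneg_right hA (mul_nonneg hx.le h)
      have h2 : x * (3 * x ^ 2 - 1) ≤ (2 * x + 1) ^ 3 := by nlinarith [pow_pos hx 3, pow_pos hx 2]
      have h3 := mul_le_mul_of_nonneg_left h2 (show 0 ≤ 1 + x by linarith)
      refine le_of_mul_le_mul_right ?_ hs
      calc _ = α * (x * s) * (x * (3 * x ^ 2 - 1)) := by ring
        _ ≤ (1 + x) * (2 * x + 1) ^ 3 := h1.trans h3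
        _ = (1 + x) * (2 * x + 1) * (s ^ 2) ^ 2 := by rw [hs2]; ring
        _ = _ := by ring
  have e : (2 * x + 1) / (x ^ 2 * (1 + x) ^ 2) - α * ((3 * x ^ 2 - 1) / (s ^ 3 * (1 + x) ^ 3))
      = ((2 * x + 1) * s ^ 3 * (1 + x) - α * (3 * x ^ 2 - 1) * x ^ 2)
        / (x ^ 2 * s ^ 3 * (1 + x) ^ 3) := by
    have h1x : 1 + x ≠ 0 := by positivity
    field_simp
  rw [e]
  exact div_nonneg (by linarith) (by positivity)
end

section
/- Let S be a nonempty finite index set, and let (b_m)_{m∈S}, (p_m)_{m∈S}, and (p̂_m)_{m∈S} be families of strictly positive reals. Set θ̂ = ∑_{m∈S} √(b_m · p̂_m), a_m = √(b_m · p̂_m)/(2·θ̂) for each m, and c = θ̂ / ∏_{m∈S} (b_m · p̂_m)^{a_m}. Then ∑_{m∈S} √(b_m · p_m) ≥ c · ∏_{m∈S} (b_m · p_m)^{a_m}, and equality holds when p_m = p̂_m for all m ∈ S. -/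
/-- Theorem 4 of the paper: with `θ̂ = ∑_{m∈S} √(b_m p̂_m)`,
`a_m = √(b_m p̂_m)/(2θ̂)` and `c = θ̂ / ∏_{m∈S} (b_m p̂_m)^{a_m}`, the sum of square
roots `∑_{m∈S} √(b_m p_m)` is lower bounded by the monomial
`c · ∏_{m∈S} (b_m p_m)^{a_m}`, with equality when `p = p̂` on `S`. -/
theorem sum_sqrt_ge_monomial {ι : Type*} (S : Finset ι) (hS : S.Nonempty)
    (b p ph : ι → ℝ)
    (hb : ∀ m ∈ S, 0 < b m) (hp : ∀ m ∈ S, 0 < p m) (hph : ∀ m ∈ S, 0 < ph m)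
    (θh : ℝ) (hθh : θh = ∑ m ∈ S, Real.sqrt (b m * ph m))
    (a : ι → ℝ) (ha : ∀ m ∈ S, a m = Real.sqrt (b m * ph m) / (2 * θh))
    (c : ℝ) (hc : c = θh / ∏ m ∈ S, (b m * ph m) ^ (a m)) :
    c * ∏ m ∈ S, (b m * p m) ^ (a m) ≤ ∑ m ∈ S, Real.sqrt (b m * p m) ∧
    ((∀ m ∈ S, p m = ph m) →
      c * ∏ m ∈ S, (b m * p m) ^ (a m) = ∑ m ∈ S, Real.sqrt (b m * p m)) := by
  have hx : ∀ m ∈ S, 0 < b m * p m := fun m hm => mul_pos (hb m hm) (hp m hm)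
  have hy : ∀ m ∈ S, 0 < b m * ph m := fun m hm => mul_pos (hb m hm) (hph m hm)
  have hθ : 0 < θh := by
    rw [hθh]
    exact Finset.sum_pos (fun m hm => Real.sqrt_pos.2 (hy m hm)) hS
  have hP : 0 < ∏ m ∈ S, (b m * ph m) ^ (a m) :=
    Finset.prod_pos fun m hm => Real.rpow_pos_of_pos (hy m hm) _
  constructor
  · have key := Real.geom_mean_le_arith_mean_weighted S
      (fun m => Real.sqrt (b m * ph m) / θh)
      (fun m => Real.sqrt (b m * p m) / Real.sqrt (b m * ph m))
      (fun m _ => by positivity)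
      (by rw [← Finset.sum_div, ← hθh, div_self hθ.ne'])
      (fun m _ => by positivity)
    have h1 : ∏ m ∈ S, (Real.sqrt (b m * p m) / Real.sqrt (b m * ph m)) ^
        (Real.sqrt (b m * ph m) / θh)
        = (∏ m ∈ S, (b m * p m) ^ (a m)) / ∏ m ∈ S, (b m * ph m) ^ (a m) := by
      rw [← Finset.prod_div_distrib]
      refine Finset.prod_congr rfl fun m hm => ?_
      have e : Real.sqrt (b m * ph m) / (2 * θh)
          = 1 / 2 * (Real.sqrt (b m * ph m) / θh) := by
        field_simp
      rw [Real.div_rpow (Real.sqrt_nonneg _) (Real.sqrt_nonneg _), ha m hm, e,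
        Real.rpow_mul (hx m hm).le, Real.rpow_mul (hy m hm).le,
        ← Real.sqrt_eq_rpow, ← Real.sqrt_eq_rpow]
    have h2 : ∑ m ∈ S, Real.sqrt (b m * ph m) / θh *
        (Real.sqrt (b m * p m) / Real.sqrt (b m * ph m))
        = (∑ m ∈ S, Real.sqrt (b m * p m)) / θh := by
      rw [Finset.sum_div]
      refine Finset.sum_congr rfl fun m hm => ?_
      have := (Real.sqrt_pos.2 (hy m hm)).ne'
      field_simp
    rw [h1, h2, le_div_iff₀ hθ] at key
    calc _ = _ := by rw [hc]; ring
      _ ≤ _ := key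
  · intro h
    have h1 : ∏ m ∈ S, (b m * p m) ^ (a m) = ∏ m ∈ S, (b m * ph m) ^ (a m) :=
      Finset.prod_congr rfl fun m hm => by rw [h m hm]
    have h2 : ∑ m ∈ S, Real.sqrt (b m * p m) = θh := by
      rw [hθh]
      exact Finset.sum_congr rfl fun m hm => by rw [h m hm]
    rw [h1, h2, hc, div_mul_cancel₀ _ hP.ne']
end

section
/- Let S be a nonempty finite index set, let K > 0, and for each m ∈ S let c_m > 0, d_m ≥ 0, β_m > 0 be constants, and let e > 0. Define λ_m(p) = K·p·β_m²/(K·p·β_m + 1) and γ̂(p) = ( ∑_{m∈S} √(c_m · λ_m(p)) )² / ( ∑_{m∈S} d_m·(β_m − λ_m(p)) + e ). Then γ̂ is strictly increasing on (0, ∞). -/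
/-- The lower-bound SINR `γ̂(p)`, common to the MRT, FZF and LZF precoding schemes,
is strictly increasing in the device's own pilot power `p` on `(0, ∞)`.  Here
`λ_m(p) = K·p·β_m²/(K·p·β_m + 1)` is the MMSE channel-estimate variance, and
`γ̂(p) = (∑_{m∈S} √(c_m λ_m(p)))² / (∑_{m∈S} d_m (β_m − λ_m(p)) + e)`. -/
theorem sinr_strictMono_in_pilot_power {ι : Type*} (S : Finset ι) (hS : S.Nonempty)
    (K : ℝ) (hK : 0 < K)
    (c d β : ι → ℝ)
    (hc : ∀ m ∈ S, 0 < c m) (hd : ∀ m ∈ S, 0 ≤ d m) (hβ : ∀ m ∈ S, 0 < β m)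
    (e : ℝ) (he : 0 < e)
    (lam : ι → ℝ → ℝ) (hlam : ∀ m p, lam m p = K * p * (β m) ^ 2 / (K * p * β m + 1))
    (γhat : ℝ → ℝ)
    (hγhat : ∀ p, γhat p =
      (∑ m ∈ S, Real.sqrt (c m * lam m p)) ^ 2 /
        (∑ m ∈ S, d m * (β m - lam m p) + e)) :
    StrictMonoOn γhat (Set.Ioi 0) := by
  intro p hp q hq hpq
  have hp' : 0 < p := hp
  have hq' : 0 < q := hq
  have hpos : ∀ m ∈ S, ∀ r : ℝ, 0 < r → 0 < lam m r := by
    intro m hm r hr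
    have hb := hβ m hm
    rw [hlam]
    positivity
  have hle : ∀ m ∈ S, ∀ r : ℝ, 0 < r → lam m r ≤ β m := by
    intro m hm r hr
    have hb := hβ m hm
    have h1 : 0 < K * r * β m + 1 := by positivity
    rw [hlam, div_le_iff₀ h1]
    nlinarith
  have hlt : ∀ m ∈ S, lam m p < lam m q := by
    intro m hm
    have hb := hβ m hm
    have h1 : 0 < K * p * β m + 1 := by positivity
    have h2 : 0 < K * q * β m + 1 := by positivity
    rw [hlam, hlam, div_lt_div_iff₀ h1 h2]
    have h3 : 0 < K * (β m) ^ 2 * (q - p) := by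
      have := sub_pos.mpr hpq
      positivity
    nlinarith
  have hnum : ∑ m ∈ S, Real.sqrt (c m * lam m p) < ∑ m ∈ S, Real.sqrt (c m * lam m q) := by
    apply Finset.sum_lt_sum_of_nonempty hS
    intro m hm
    exact Real.sqrt_lt_sqrt (mul_pos (hc m hm) (hpos m hm p hp')).le
      (mul_lt_mul_of_pos_left (hlt m hm) (hc m hm))
  have hnum0 : 0 ≤ ∑ m ∈ S, Real.sqrt (c m * lam m p) :=
    Finset.sum_nonneg fun m _ => Real.sqrt_nonneg _
  have hden : ∑ m ∈ S, d m * (β m - lam m q) ≤ ∑ m ∈ S, d m * (β m - lam m p) := by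
    apply Finset.sum_le_sum
    intro m hm
    exact mul_le_mul_of_nonneg_left (by linarith [hlt m hm]) (hd m hm)
  have hden0 : 0 ≤ ∑ m ∈ S, d m * (β m - lam m q) :=
    Finset.sum_nonneg fun m hm => mul_nonneg (hd m hm) (sub_nonneg.mpr (hle m hm q hq'))
  rw [hγhat, hγhat]
  exact div_lt_div₀ (pow_lt_pow_left₀ hnum hnum0 two_ne_zero) (by linarith)
    (sq_nonneg _) (by linarith)
end

section
/- Let S be a nonempty finite index set, let K > 0, and for each m ∈ S let c_m > 0, d_m ≥ 0, β_m > 0 be constants, and let e > 0. Define λ_m(p) = K·p·β_m²/(K·p·β_m + 1) and γ̂(p) = ( ∑_{m∈S} √(c_m · λ_m(p)) )² / ( ∑_{m∈S} d_m·(β_m − λ_m(p)) + e ). Let α ≥ 0 and let 0 < p₁ < p₂ be such that α ≤ g(1/γ̂(p₁)), where g(x) = (1 + x)·ln(1 + 1/x)/√(2x + 1). Then f_α(1/γ̂(p₁)) < f_α(1/γ̂(p₂)), where f_α(x) = ln(1 + 1/x) − α·√(2x + 1)/(1 + x). In particular, the finite-blocklength rate f_α(1/γ̂(p)) is monotonically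 increasing in the pilot power p, so it is maximized at the maximal admissible pilot power. -/
lemma g_hasDeriv (x : ℝ) (hx : 0 < x) :
    HasDerivAt g (((Real.log (1 + 1 / x) - 1 / x) * Real.sqrt (2 * x + 1)
      - (1 + x) * Real.log (1 + 1 / x) * (1 / Real.sqrt (2 * x + 1)))
        / Real.sqrt (2 * x + 1) ^ 2) x := by
  have hs : 0 < Real.sqrt (2 * x + 1) := Real.sqrt_pos.2 (by linarith)
  have h1 : HasDerivAt (fun y : ℝ => 1 + y) 1 x := (hasDerivAt_id x).const_add 1
  have h2 : HasDerivAt (fun y : ℝ => 1 + 1 / y) (-(x ^ 2)⁻¹) x := by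
    simpa [one_div] using (hasDerivAt_inv hx.ne').const_add 1
  have hpos : 0 < 1 + 1 / x := by positivity
  have h3 := h1.mul (h2.log hpos.ne')
  have h4 : HasDerivAt (fun y : ℝ => 2 * y + 1) 2 x := by
    simpa using ((hasDerivAt_id x).const_mul 2).add_const 1
  have h5 := h4.sqrt (by linarith : 2 * x + 1 ≠ 0)
  have h6 := h3.div h5 hs.ne'
  refine h6.congr_deriv ?_
  have e1 : 1 * Real.log (1 + 1 / x) + (1 + x) * (-(x ^ 2)⁻¹ / (1 + 1 / x))
      = Real.log (1 + 1 / x) - 1 / x := by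
    have : 1 + 1 / x = (1 + x) / x := by field_simp; ring
    have h : (1 + x) * (-(x ^ 2)⁻¹ / (1 + 1 / x)) = - (1 / x) := by
      rw [this]; field_simp
    rw [h]; ring
  have e2 : 2 / (2 * Real.sqrt (2 * x + 1)) = 1 / Real.sqrt (2 * x + 1) := by
    field_simp
  simp only [Pi.mul_apply]
  rw [e1, e2]

lemma g_strictAnti : StrictAntiOn g (Set.Ioi 0) := by
  apply strictAntiOn_of_deriv_neg (convex_Ioi 0)
  · intro x hx
    exact (g_hasDeriv x hx).continuousAt.continuousWithinAt
  · intro x hx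
    rw [interior_Ioi] at hx
    have hx : 0 < x := hx
    rw [(g_hasDeriv x hx).deriv]
    have hs : 0 < Real.sqrt (2 * x + 1) := Real.sqrt_pos.2 (by linarith)
    have hq : Real.sqrt (2 * x + 1) ^ 2 = 2 * x + 1 := Real.sq_sqrt (by linarith)
    apply div_neg_of_neg_of_pos _ (by positivity)
    have hL : Real.log (1 + 1 / x) ≤ 1 / x := by
      have := Real.log_le_sub_one_of_pos (show 0 < 1 + 1 / x by positivity)
      linarith
    have hxL : x * Real.log (1 + 1 / x) ≤ 1 := by
      have := mul_le_mul_of_nonneg_left hL hx.le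
      rwa [mul_one_div_cancel hx.ne'] at this
    have hi : 0 < 1 / x := by positivity
    have hxx : x * (1 / x) = 1 := mul_one_div_cancel hx.ne'
    generalize Real.log (1 + 1 / x) = L at *
    generalize 1 / x = i at *
    generalize Real.sqrt (2 * x + 1) = s at *
    have : (L - i) * s - (1 + x) * L * (1 / s) = (x * L - 2 * (x * i) - i) / s := by
      field_simp
      rw [hq]; ring
    rw [this]
    exact div_neg_of_neg_of_pos (by rw [hxx]; linarith) hs

lemma h_lt {x y : ℝ} (hx : 0 < x) (hxy : x < y) :
    Real.sqrt (2 * y + 1) / (1 + y) < Real.sqrt (2 * x + 1) / (1 + x) := by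
  rw [div_lt_div_iff₀ (by linarith) (by linarith)]
  have hy : 0 < y := hx.trans hxy
  apply lt_of_pow_lt_pow_left₀ 2 (by positivity)
  rw [mul_pow, mul_pow, Real.sq_sqrt (by linarith), Real.sq_sqrt (by linarith)]
  have : 0 < (y - x) * (x + y + 2 * (x * y)) := by
    have := mul_pos hx (hx.trans hxy)
    exact mul_pos (by linarith) (by linarith)
  nlinarith

lemma f_eq (α : ℝ) {x : ℝ} (hx : 0 < x) :
    fα α x = Real.sqrt (2 * x + 1) / (1 + x) * (g x - α) := by
  have hs : 0 < Real.sqrt (2 * x + 1) := Real.sqrt_pos.2 (by linarith)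
  unfold fα g
  have : 1 + x ≠ 0 := by linarith
  generalize Real.log (1 + 1 / x) = L
  field_simp

lemma f_lt {α x y : ℝ} (hx : 0 < x) (hxy : x < y) (h : α ≤ g y) : fα α y < fα α x := by
  have hy := hx.trans hxy
  rw [f_eq α hx, f_eq α hy]
  have hg : g y < g x := g_strictAnti hx hy hxy
  have hh := h_lt hx hxy
  have hp : 0 < Real.sqrt (2 * x + 1) / (1 + x) := by positivity
  calc _ ≤ Real.sqrt (2 * x + 1) / (1 + x) * (g y - α) :=
        mul_le_mul_of_nonneg_right hh.le (by linarith)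
    _ < _ := mul_lt_mul_of_pos_left (by linarith) hp

/-- Lemma 2 of the paper: with `λ_m(p) = K·p·β_m²/(K·p·β_m + 1)` and
`γ̂(p) = (∑_{m∈S} √(c_m λ_m(p)))² / (∑_{m∈S} d_m (β_m − λ_m(p)) + e)`,
if `α ≥ 0`, `0 < p₁ < p₂` and `α ≤ g(1/γ̂(p₁))`, then
`f_α(1/γ̂(p₁)) < f_α(1/γ̂(p₂))`: the finite-blocklength rate is monotonically
increasing in the pilot power, hence maximized at the maximal pilot power. -/
theorem rate_strictMono_in_pilot_power {ι : Type*} (S : Finset ι) (hS : S.Nonempty)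
    (K : ℝ) (hK : 0 < K)
    (c d β : ι → ℝ)
    (hc : ∀ m ∈ S, 0 < c m) (hd : ∀ m ∈ S, 0 ≤ d m) (hβ : ∀ m ∈ S, 0 < β m)
    (e : ℝ) (he : 0 < e)
    (lam : ι → ℝ → ℝ) (hlam : ∀ m p, lam m p = K * p * (β m) ^ 2 / (K * p * β m + 1))
    (γhat : ℝ → ℝ)
    (hγhat : ∀ p, γhat p =
      (∑ m ∈ S, Real.sqrt (c m * lam m p)) ^ 2 /
        (∑ m ∈ S, d m * (β m - lam m p) + e))
    (α : ℝ) (hα : 0 ≤ α)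
    (p₁ p₂ : ℝ) (hp₁ : 0 < p₁) (hp₁₂ : p₁ < p₂)
    (hαg : α ≤ g (1 / γhat p₁)) :
    fα α (1 / γhat p₁) < fα α (1 / γhat p₂) := by
  have hp₂ : 0 < p₂ := hp₁.trans hp₁₂
  have hpos : ∀ m ∈ S, ∀ p, 0 < p → 0 < lam m p := by
    intro m hm p hp
    have := hβ m hm
    rw [hlam]; positivity
  have hle : ∀ m ∈ S, ∀ p, 0 < p → 0 ≤ β m - lam m p := by
    intro m hm p hp
    have := hβ m hm
    have h : β m - lam m p = β m / (K * p * β m + 1) := by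
      rw [hlam]; field_simp; ring
    rw [h]; positivity
  have hlt : ∀ m ∈ S, lam m p₁ < lam m p₂ := by
    intro m hm
    have := hβ m hm
    rw [hlam, hlam, div_lt_div_iff₀ (by positivity) (by positivity)]
    have : 0 < K * β m ^ 2 * (p₂ - p₁) := mul_pos (by positivity) (by linarith)
    nlinarith
  have hN : ∑ m ∈ S, Real.sqrt (c m * lam m p₁) < ∑ m ∈ S, Real.sqrt (c m * lam m p₂) := by
    apply Finset.sum_lt_sum_of_nonempty hS
    intro m hm
    exact Real.sqrt_lt_sqrt (mul_pos (hc m hm) (hpos m hm _ hp₁)).le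
      (mul_lt_mul_of_pos_left (hlt m hm) (hc m hm))
  have hN0 : 0 < ∑ m ∈ S, Real.sqrt (c m * lam m p₁) :=
    Finset.sum_pos (fun m hm => Real.sqrt_pos.2 (mul_pos (hc m hm) (hpos m hm _ hp₁))) hS
  have hD : ∑ m ∈ S, d m * (β m - lam m p₂) ≤ ∑ m ∈ S, d m * (β m - lam m p₁) := by
    apply Finset.sum_le_sum
    intro m hm
    exact mul_le_mul_of_nonneg_left (by linarith [hlt m hm]) (hd m hm)
  have hD0 : 0 ≤ ∑ m ∈ S, d m * (β m - lam m p₂) :=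
    Finset.sum_nonneg (fun m hm => mul_nonneg (hd m hm) (hle m hm _ hp₂))
  have hγ1 : 0 < γhat p₁ := by
    rw [hγhat]; exact div_pos (by positivity) (by linarith)
  have hγ : γhat p₁ < γhat p₂ := by
    rw [hγhat, hγhat]
    exact div_lt_div₀ (pow_lt_pow_left₀ hN hN0.le two_ne_zero) (by linarith)
      (by positivity) (by linarith)
  exact f_lt (one_div_pos.2 (hγ1.trans hγ)) (one_div_lt_one_div_of_lt hγ1 hγ) hαg
end
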